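/- Let f : Q0 = [0,1]^n → [0,∞) be integrable. Then for every t ∈ (0,1] and every γ > 1 with t/γ ∈ (0,1], f^{**}(t/γ) ≤ (1 + 2^{n−1} γ v(f; σ_t)) · f^{**}(t), where σ_t = min(2 t^{1/n}, 1). -/

import Mathlib

open MeasureTheory Set Real

noncomputable section

/-- The unit cube `Q₀ = [0,1]ⁿ` in `ℝⁿ`. -/
def Q0 (n : ℕ) : Set (Fin n → ℝ) := Set.Icc 0 1

/-- The integral average `f_Q = (1/|Q|) ∫_Q f` of `f` over `Q`. -/
def avgOn {n : ℕ} (f : (Fin n → ℝ) → ℝ) (Q : Set (Fin n → ℝ)) : ℝ :=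
  (volume Q).toReal⁻¹ * ∫ x in Q, f x

/-- The mean oscillation `Ω(f,Q) = (1/|Q|) ∫_Q |f - f_Q|` of `f` over `Q`. -/
def oscOn {n : ℕ} (f : (Fin n → ℝ) → ℝ) (Q : Set (Fin n → ℝ)) : ℝ :=
  (volume Q).toReal⁻¹ * ∫ x in Q, |f x - avgOn f Q|

/-- `Q` is a dyadic subcube of `[0,1]ⁿ` of side length `2⁻ᵏ`,
i.e. `Q = ∏ᵢ [mᵢ 2⁻ᵏ, (mᵢ+1) 2⁻ᵏ]` with `0 ≤ mᵢ < 2ᵏ`. -/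
def IsDyadicSide (n k : ℕ) (Q : Set (Fin n → ℝ)) : Prop :=
  ∃ m : Fin n → ℕ, (∀ i, m i < 2 ^ k) ∧
    Q = Set.Icc (fun i => (m i : ℝ) / 2 ^ k) (fun i => ((m i : ℝ) + 1) / 2 ^ k)

/-- `Q` belongs to the family `𝒟` of dyadic subcubes of `[0,1]ⁿ`. -/
def IsDyadic (n : ℕ) (Q : Set (Fin n → ℝ)) : Prop := ∃ k, IsDyadicSide n k Q

/-- One-dimensional integral average `g_J` over a set `J ⊆ ℝ`. -/
def avgI (g : ℝ → ℝ) (J : Set ℝ) : ℝ := (volume J).toReal⁻¹ * ∫ u in J, g u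

/-- One-dimensional mean oscillation `Ω(g,J)` over a set `J ⊆ ℝ`. -/
def oscI (g : ℝ → ℝ) (J : Set ℝ) : ℝ :=
  (volume J).toReal⁻¹ * ∫ u in J, |g u - avgI g J|

/-- `g : (0,1] → ℝ` is the nonincreasing, left-continuous rearrangement of
`f : [0,1]ⁿ → ℝ`, i.e. it is nonincreasing, left continuous and equimeasurable with `f`. -/
def IsRearrangement {n : ℕ} (f : (Fin n → ℝ) → ℝ) (g : ℝ → ℝ) : Prop :=
  AntitoneOn g (Set.Ioc 0 1) ∧
  (∀ t ∈ Set.Ioc (0:ℝ) 1, ContinuousWithinAt g (Set.Iio t) t) ∧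
  ∀ lam : ℝ, volume {t ∈ Set.Ioc (0:ℝ) 1 | lam < g t} = volume {x ∈ Q0 n | lam < f x}

/-- The Hardy average `F(t) = (1/t) ∫_0^t g(u) du`. -/
def hardyAvg (g : ℝ → ℝ) (t : ℝ) : ℝ := t⁻¹ * ∫ u in Set.Ioc (0:ℝ) t, g u

/-- The Gurov–Reshetnyak modulus
`v(f;σ) = sup { Ω(f,Q)/f_Q : Q ∈ 𝒟, ℓ(Q) ≤ σ, f_Q > 0 }` (equal to `0` if no such `Q` exists,
by the convention `sSup ∅ = 0` in `ℝ`). -/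
def vGR {n : ℕ} (f : (Fin n → ℝ) → ℝ) (σ : ℝ) : ℝ :=
  sSup {r : ℝ | ∃ k Q, IsDyadicSide n k Q ∧ ((2:ℝ) ^ k)⁻¹ ≤ σ ∧
    0 < avgOn f Q ∧ r = oscOn f Q / avgOn f Q}

/-- `f` satisfies the dyadic Gurov–Reshetnyak condition `f ∈ GR_𝒟(Q₀,ε)`:
`f : Q₀ → [0,∞)` is integrable and `Ω(f,Q) ≤ ε f_Q` for every dyadic cube `Q`. -/
def GRcond {n : ℕ} (f : (Fin n → ℝ) → ℝ) (ε : ℝ) : Prop :=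
  IntegrableOn f (Q0 n) ∧ (∀ x ∈ Q0 n, 0 ≤ f x) ∧
    ∀ Q, IsDyadic n Q → oscOn f Q ≤ ε * avgOn f Q

lemma vol_Q0 (n : ℕ) : volume (Q0 n) = 1 := by
  simp [Q0, Real.volume_Icc_pi]

lemma meas_Q0 (n : ℕ) : MeasurableSet (Q0 n) := measurableSet_Icc

lemma map_eq {n : ℕ} (f : (Fin n → ℝ) → ℝ) (hf : IntegrableOn f (Q0 n))
    (hpos : ∀ x ∈ Q0 n, 0 ≤ f x)
    (g : ℝ → ℝ) (hfs : IsRearrangement (fun x => |f x|) g) :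
    AEMeasurable g (volume.restrict (Ioc (0:ℝ) 1)) ∧
    Measure.map g (volume.restrict (Ioc (0:ℝ) 1)) = Measure.map f (volume.restrict (Q0 n)) := by
  obtain ⟨h1, -, h3⟩ := hfs
  have hg : AEMeasurable g (volume.restrict (Ioc (0:ℝ) 1)) :=
    aemeasurable_restrict_of_antitoneOn measurableSet_Ioc h1
  refine ⟨hg, ?_⟩
  have hfm : AEMeasurable f (volume.restrict (Q0 n)) := hf.aestronglyMeasurable.aemeasurable
  have hv := vol_Q0 n
  have : IsProbabilityMeasure (volume.restrict (Q0 n)) := ⟨by simp [hv]⟩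
  have : IsProbabilityMeasure (volume.restrict (Ioc (0:ℝ) 1)) := ⟨by simp⟩
  have := Measure.isProbabilityMeasure_map hg
  have := Measure.isProbabilityMeasure_map hfm
  apply Measure.ext_of_Iic
  intro a
  rw [← compl_Ioi, prob_compl_eq_one_sub measurableSet_Ioi, prob_compl_eq_one_sub measurableSet_Ioi,
    Measure.map_apply_of_aemeasurable hg measurableSet_Ioi,
    Measure.map_apply_of_aemeasurable hfm measurableSet_Ioi,
    Measure.restrict_apply' measurableSet_Ioc, Measure.restrict_apply' (meas_Q0 n)]
  congr 1
  have := h3 a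
  convert this using 2
  · ext x; simp [and_comm]
  · ext x
    simp only [mem_inter_iff, mem_preimage, mem_Ioi, mem_ofPred_eq]
    constructor
    · rintro ⟨h, h'⟩; exact ⟨h', by rwa [abs_of_nonneg (hpos x h')]⟩
    · rintro ⟨h', h⟩; exact ⟨by rwa [abs_of_nonneg (hpos x h')] at h, h'⟩

lemma rearr_int {n : ℕ} (f : (Fin n → ℝ) → ℝ) (hf : IntegrableOn f (Q0 n))
    (hpos : ∀ x ∈ Q0 n, 0 ≤ f x)
    (g : ℝ → ℝ) (hfs : IsRearrangement (fun x => |f x|) g) :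
    IntegrableOn g (Ioc (0:ℝ) 1) ∧
    ∀ c : ℝ, ∫ u in Ioc (0:ℝ) 1, max (g u - c) 0 = ∫ x in Q0 n, max (f x - c) 0 := by
  obtain ⟨hg, h⟩ := map_eq f hf hpos g hfs
  have hfm : AEMeasurable f (volume.restrict (Q0 n)) := hf.aestronglyMeasurable.aemeasurable
  constructor
  · have h2 : Integrable (fun y : ℝ => y) (Measure.map f (volume.restrict (Q0 n))) :=
      (integrable_map_measure (by fun_prop) hfm).2 hf
    rw [← h] at h2
    exact (integrable_map_measure (by fun_prop) hg).1 h2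
  · intro c
    have e1 := integral_map (f := fun y : ℝ => max (y - c) 0) hg (by fun_prop)
    have e2 := integral_map (f := fun y : ℝ => max (y - c) 0) hfm (by fun_prop)
    rw [← e1, ← e2, h]

/-- sets of measure at least `t` have average at most `f**(t)` -/
lemma big_set {n : ℕ} (f : (Fin n → ℝ) → ℝ) (hf : IntegrableOn f (Q0 n))
    (hpos : ∀ x ∈ Q0 n, 0 ≤ f x)
    (g : ℝ → ℝ) (hfs : IsRearrangement (fun x => |f x|) g) (t : ℝ) (ht : t ∈ Ioc (0:ℝ) 1)
    (U : Set (Fin n → ℝ)) (hU : U ⊆ Q0 n) (htU : t ≤ volume.real U) :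
    ∫ x in U, f x ≤ hardyAvg g t * volume.real U := by
  obtain ⟨hgi, hc⟩ := rearr_int f hf hpos g hfs
  have hanti := hfs.1
  set l := g t with hl
  set A := hardyAvg g t with hA
  have hgt : IntegrableOn g (Ioc 0 t) := hgi.mono_set (Ioc_subset_Ioc_right ht.2)
  have hUfin : volume U ≠ ⊤ := ((measure_mono hU).trans_lt (by simp [vol_Q0])).ne
  have hAt : ∫ u in Ioc (0:ℝ) t, g u = t * A := by
    rw [hA, hardyAvg, mul_inv_cancel_left₀ ht.1.ne']
  have e1 : ∫ u in Ioc (0:ℝ) t, (g u - l) = t * (A - l) := by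
    rw [integral_sub hgt (integrableOn_const (by simp)), hAt]
    simp [ht.1.le]; ring
  have e2 : ∫ u in Ioc (0:ℝ) 1, max (g u - l) 0 = t * (A - l) := by
    rw [← e1, ← Ioc_union_Ioc_eq_Ioc ht.1.le ht.2, setIntegral_union]
    · rw [setIntegral_congr_fun (g := fun u => g u - l) measurableSet_Ioc,
        setIntegral_congr_fun (s := Ioc t 1) (g := fun u => 0) measurableSet_Ioc]
      · simp
      · intro u hu
        have := hanti ht ⟨ht.1.trans hu.1, hu.2⟩ hu.1.le
        simp only [max_eq_right_iff]; linarith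
      · intro u hu
        have := hanti ⟨hu.1, hu.2.trans ht.2⟩ ht hu.2
        simp only [max_eq_left_iff]; linarith
    · rw [Set.disjoint_left]; intro x hx hx'; exact absurd hx.2 (not_le.2 hx'.1)
    · exact measurableSet_Ioc
    · exact (hgt.sub (integrableOn_const (by simp))).sup (integrable_zero _ _ _)
    · exact ((hgi.mono_set (Ioc_subset_Ioc_left ht.1.le)).sub (integrableOn_const (by simp))).sup
        (integrable_zero _ _ _)
  have hAl : 0 ≤ t * (A - l) := by
    rw [← e2]; exact integral_nonneg fun _ => le_max_right _ _
  have hAl' : 0 ≤ A - l := nonneg_of_mul_nonneg_right hAl ht.1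
  have hfU := hf.mono_set hU
  have : IsFiniteMeasure (volume.restrict (Q0 n)) := ⟨by simp [vol_Q0]⟩
  have hm : IntegrableOn (fun x => max (f x - l) 0) (Q0 n) :=
    (hf.sub (integrable_const l)).sup (integrable_zero _ _ _)
  have e3 : ∫ x in U, (f x - l) ≤ t * (A - l) := by
    rw [← e2, hc]
    calc ∫ x in U, (f x - l) ≤ ∫ x in U, max (f x - l) 0 :=
          integral_mono (hfU.sub (integrableOn_const hUfin)) (hm.mono_set hU)
            fun x => le_max_left _ _
      _ ≤ _ := setIntegral_mono_set hm (Filter.Eventually.of_forall fun _ => le_max_right _ _)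
            (Filter.Eventually.of_forall hU)
  rw [integral_sub hfU (integrableOn_const hUfin), setIntegral_const] at e3
  simp only [smul_eq_mul] at e3
  nlinarith

def dcube {n : ℕ} (k : ℕ) (m : Fin n → ℕ) : Set (Fin n → ℝ) :=
  Set.Icc (fun i => (m i : ℝ) / 2 ^ k) (fun i => ((m i : ℝ) + 1) / 2 ^ k)

def cell {n : ℕ} (k : ℕ) (m : Fin n → ℕ) : Set (Fin n → ℝ) :=
  Set.pi Set.univ fun i => Set.Ico ((m i : ℝ) / 2 ^ k) (((m i : ℝ) + 1) / 2 ^ k)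

lemma cell_ae {n : ℕ} (k : ℕ) (m : Fin n → ℕ) : cell k m =ᵐ[volume] dcube k m :=
  Measure.univ_pi_Ico_ae_eq_Icc

lemma meas_cell {n : ℕ} (k : ℕ) (m : Fin n → ℕ) : MeasurableSet (cell k m) :=
  MeasurableSet.univ_pi fun _ => measurableSet_Ico

lemma mem_cell {n : ℕ} (k : ℕ) (m : Fin n → ℕ) (x : Fin n → ℝ) :
    x ∈ cell k m ↔ ∀ i, 0 ≤ x i ∧ ⌊x i * 2 ^ k⌋₊ = m i := by
  simp only [cell, Set.mem_pi, Set.mem_univ, true_imp_iff, Set.mem_Ico]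
  refine forall_congr' fun i => ?_
  have h2 : (0:ℝ) < 2 ^ k := by positivity
  rw [div_le_iff₀ h2, lt_div_iff₀ h2]
  constructor
  · rintro ⟨h, h'⟩
    have h0 : 0 ≤ x i * 2 ^ k := le_trans (Nat.cast_nonneg _) h
    exact ⟨nonneg_of_mul_nonneg_left h0 h2, (Nat.floor_eq_iff h0).2 ⟨h, h'⟩⟩
  · rintro ⟨h, h'⟩
    exact (Nat.floor_eq_iff (mul_nonneg h h2.le)).1 h'

lemma floor_anc (x : ℝ) (k j : ℕ) : ⌊x * 2 ^ k⌋₊ = ⌊x * 2 ^ (k + j)⌋₊ / 2 ^ j := by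
  have := Nat.floor_div_natCast (x * 2 ^ (k + j)) (2 ^ j)
  rw [← this]
  congr 1
  push_cast
  rw [pow_add]
  field_simp

lemma vol_dcube {n : ℕ} (k : ℕ) (m : Fin n → ℕ) :
    volume.real (dcube k m) = (((2:ℝ) ^ k)⁻¹) ^ n := by
  rw [dcube, measureReal_def, Real.volume_Icc_pi_toReal]
  · simp [← sub_div]
  · intro i; simp only; gcongr; linarith

lemma dcube_sub {n : ℕ} (k : ℕ) (m : Fin n → ℕ) (hm : ∀ i, m i < 2 ^ k) :
    dcube k m ⊆ Q0 n := by
  intro x hx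
  have h2 : (0:ℝ) < 2 ^ k := by positivity
  refine ⟨fun i => le_trans (by simp; positivity) (hx.1 i), fun i => (hx.2 i).trans ?_⟩
  simp only [Pi.one_apply]
  rw [div_le_one h2]
  exact_mod_cast hm i

lemma avg_eq {n : ℕ} (f : (Fin n → ℝ) → ℝ) (k : ℕ) (m : Fin n → ℕ) :
    ∫ x in dcube k m, f x = avgOn f (dcube k m) * volume.real (dcube k m) := by
  have : volume.real (dcube k m) ≠ 0 := by rw [vol_dcube]; positivity
  rw [avgOn, ← measureReal_def]; field_simp

lemma half_osc {n : ℕ} (f : (Fin n → ℝ) → ℝ) (k : ℕ) (m : Fin n → ℕ)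
    (hf : IntegrableOn f (dcube k m)) (A : ℝ) (hA : avgOn f (dcube k m) ≤ A) :
    ∫ x in dcube k m, max (f x - A) 0 ≤
      2⁻¹ * oscOn f (dcube k m) * volume.real (dcube k m) := by
  have hv : volume.real (dcube k m) ≠ 0 := by rw [vol_dcube]; positivity
  set c := avgOn f (dcube k m) with hc
  have hfin : volume (dcube k m) ≠ ⊤ := by
    intro h; simp [measureReal_def, h] at hv
  have hcI : IntegrableOn (fun _ => c) (dcube k m) := integrableOn_const hfin
  have hAI : IntegrableOn (fun _ => A) (dcube k m) := integrableOn_const hfin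
  have h1 : IntegrableOn (fun x => f x - c) (dcube k m) := hf.sub hcI
  have e0 : ∫ x in dcube k m, (f x - c) = 0 := by
    rw [integral_sub hf hcI, avg_eq, setIntegral_const, ← hc]; simp [mul_comm]
  calc ∫ x in dcube k m, max (f x - A) 0 ≤ ∫ x in dcube k m, 2⁻¹ * (|f x - c| + (f x - c)) := by
        refine integral_mono ((hf.sub hAI).sup (integrable_zero _ _ _)) ((h1.abs.add h1).const_mul _) ?_
        intro x
        simp only
        rcases abs_cases (f x - c) with h | h
        · apply max_le <;> linarith
        · apply max_le <;> linarith
    _ = 2⁻¹ * oscOn f (dcube k m) * volume.real (dcube k m) := by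
        rw [integral_const_mul, integral_add h1.abs h1, e0, oscOn, ← measureReal_def, ← hc]
        field_simp; simp

lemma osc_le {n : ℕ} (f : (Fin n → ℝ) → ℝ) (k : ℕ) (m : Fin n → ℕ)
    (hf : IntegrableOn f (dcube k m)) (hpos : ∀ x ∈ dcube k m, 0 ≤ f x) :
    oscOn f (dcube k m) ≤ 2 * avgOn f (dcube k m) := by
  have hv : 0 < volume.real (dcube k m) := by rw [vol_dcube]; positivity
  set c := avgOn f (dcube k m) with hc
  have hfin : volume (dcube k m) ≠ ⊤ := by
    intro h; simp [measureReal_def, h] at hv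
  have hcI : IntegrableOn (fun _ => c) (dcube k m) := integrableOn_const hfin
  have hc0 : 0 ≤ c := by
    rw [hc, avgOn]
    exact mul_nonneg (by positivity) (setIntegral_nonneg measurableSet_Icc hpos)
  rw [oscOn, ← measureReal_def, inv_mul_le_iff₀ hv]
  calc ∫ x in dcube k m, |f x - c| ≤ ∫ x in dcube k m, (f x + c) := by
        refine setIntegral_mono_on (hf.sub hcI).abs (hf.add hcI) measurableSet_Icc ?_
        intro x hx
        have := hpos x hx
        rw [abs_le]; constructor <;> linarith
    _ = _ := by
        rw [integral_add hf hcI, avg_eq, setIntegral_const, ← hc]; simp; ring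

lemma osc_v {n : ℕ} (f : (Fin n → ℝ) → ℝ) (hf : IntegrableOn f (Q0 n))
    (hpos : ∀ x ∈ Q0 n, 0 ≤ f x) (σ : ℝ) (k : ℕ) (m : Fin n → ℕ) (hm : ∀ i, m i < 2 ^ k)
    (hσ : ((2:ℝ) ^ k)⁻¹ ≤ σ) :
    oscOn f (dcube k m) ≤ vGR f σ * avgOn f (dcube k m) := by
  have hs := dcube_sub k m hm
  have hc0 : 0 ≤ avgOn f (dcube k m) := by
    rw [avgOn]
    exact mul_nonneg (by positivity) (setIntegral_nonneg measurableSet_Icc fun x hx => hpos x (hs hx))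
  rcases hc0.eq_or_lt with h0 | h0
  · have := osc_le f k m (hf.mono_set hs) (fun x hx => hpos x (hs hx))
    rw [← h0] at this ⊢; linarith
  · rw [← div_le_iff₀ h0]
    refine le_csSup ⟨2, ?_⟩ ⟨k, _, ⟨m, hm, rfl⟩, hσ, h0, rfl⟩
    rintro r ⟨k', Q, ⟨m', hm', rfl⟩, -, h, rfl⟩
    rw [div_le_iff₀ h]
    have hs' := dcube_sub k' m' hm'
    exact osc_le f k' m' (hf.mono_set hs') (fun x hx => hpos x (hs' hx))

lemma v_nonneg {n : ℕ} (f : (Fin n → ℝ) → ℝ) (σ : ℝ) : 0 ≤ vGR f σ := by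
  apply Real.sSup_nonneg
  rintro r ⟨k', Q, -, -, h, rfl⟩
  refine div_nonneg (mul_nonneg (by positivity) (integral_nonneg fun _ => abs_nonneg _)) h.le

lemma leb {n : ℕ} (f : (Fin n → ℝ) → ℝ) (hf : IntegrableOn f (Q0 n)) (A : ℝ) :
    ∀ᵐ x ∂(volume.restrict (Q0 n)), (∀ i, 0 ≤ x i ∧ x i < 1) ∧
      ((∀ k, avgOn f (dcube k (fun i => ⌊x i * 2 ^ k⌋₊)) ≤ A) → f x ≤ A) := by
  have hF : Integrable ((Q0 n).indicator f) := (integrable_indicator_iff (meas_Q0 n)).2 hf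
  have h1 := IsUnifLocDoublingMeasure.ae_tendsto_average (volume : Measure (Fin n → ℝ))
    hF.locallyIntegrable 1
  have h2 : ∀ᵐ x ∂(volume.restrict (Q0 n)), x ∈ cell 0 (fun _ : Fin n => 0) := by
    have e : Q0 n = dcube 0 (fun _ : Fin n => 0) := by
      simp only [Q0, dcube]; congr 1 <;> (ext; simp)
    rw [e, ← Measure.restrict_congr_set (cell_ae 0 _)]
    exact ae_restrict_mem (meas_cell _ _)
  filter_upwards [ae_restrict_of_ae h1, h2, ae_restrict_mem (meas_Q0 n)] with x hx hx2 hxQ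
  have hx01 : ∀ i, 0 ≤ x i ∧ x i < 1 := by
    intro i
    have := hx2 i (Set.mem_univ _)
    simpa using this
  refine ⟨hx01, fun hk => ?_⟩
  have hball : ∀ k : ℕ, Metric.closedBall
      (fun i => ((⌊x i * 2 ^ k⌋₊ : ℝ) + 2⁻¹) / 2 ^ k) (2⁻¹ * (2⁻¹:ℝ) ^ k) =
      dcube k (fun i => ⌊x i * 2 ^ k⌋₊) := by
    intro k
    rw [closedBall_pi _ (by positivity), dcube, ← Set.pi_univ_Icc]
    congr 1
    ext1 i
    rw [Real.closedBall_eq_Icc]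
    congr 1 <;> (rw [inv_pow]; field_simp; ring)
  have hmem : ∀ k : ℕ, x ∈ cell k (fun i => ⌊x i * 2 ^ k⌋₊) := fun k =>
    (mem_cell _ _ _).2 fun i => ⟨(hx01 i).1, rfl⟩
  have hmem' : ∀ k : ℕ, x ∈ dcube k (fun i => ⌊x i * 2 ^ k⌋₊) := fun k =>
    ⟨fun i => (hmem k i (Set.mem_univ _)).1, fun i => (hmem k i (Set.mem_univ _)).2.le⟩
  have hlim := hx (l := Filter.atTop) (fun (k : ℕ) i => ((⌊x i * 2 ^ k⌋₊ : ℝ) + 2⁻¹) / 2 ^ k)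
    (fun k => 2⁻¹ * (2⁻¹:ℝ) ^ k) (by
      rw [tendsto_nhdsWithin_iff]
      refine ⟨?_, Filter.Eventually.of_forall fun k => ?_⟩
      · have := (tendsto_pow_atTop_nhds_zero_of_lt_one (r := (2⁻¹:ℝ)) (by norm_num)
          (by norm_num)).const_mul (2⁻¹:ℝ)
        simpa using this
      · simp) (Filter.Eventually.of_forall fun k => by
        rw [one_mul, hball]; exact hmem' k)
  rw [Set.indicator_of_mem hxQ] at hlim
  refine le_of_tendsto hlim (Filter.Eventually.of_forall fun k => ?_)
  refine le_trans (le_of_eq ?_) (hk k)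
  have hlt : ∀ i, ⌊x i * 2 ^ k⌋₊ < 2 ^ k := by
    intro i
    rw [Nat.floor_lt (mul_nonneg (hx01 i).1 (by positivity))]
    push_cast
    have : (0:ℝ) < 2 ^ k := by positivity
    nlinarith [(hx01 i).2]
  rw [hball, setAverage_eq, avgOn, measureReal_def, smul_eq_mul]
  congr 1
  refine setIntegral_congr_fun measurableSet_Icc fun y hy => ?_
  exact Set.indicator_of_mem (dcube_sub k _ hlt hy) _

def Hot {n : ℕ} (f : (Fin n → ℝ) → ℝ) (A : ℝ) (k : ℕ) (m : Fin n → ℕ) : Prop :=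
  ∃ m' : Fin n → ℕ, (∀ i, m' i / 2 = m i) ∧ A < avgOn f (dcube (k + 1) m')

def FirstHot {n : ℕ} (f : (Fin n → ℝ) → ℝ) (A : ℝ) (p : ℕ × (Fin n → ℕ)) : Prop :=
  Hot f A p.1 p.2 ∧ (∀ i, p.2 i < 2 ^ p.1) ∧
    ∀ j d, 0 < d → j + d = p.1 → ¬ Hot f A j (fun i => p.2 i / 2 ^ d)

lemma firstHot_unique {n : ℕ} (f : (Fin n → ℝ) → ℝ) (A : ℝ) (p q : ℕ × (Fin n → ℕ))
    (hp : FirstHot f A p) (hq : FirstHot f A q) (x : Fin n → ℝ)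
    (hx : x ∈ cell p.1 p.2) (hx' : x ∈ cell q.1 q.2) : p = q := by
  have key : ∀ p q : ℕ × (Fin n → ℕ), FirstHot f A p → FirstHot f A q →
      x ∈ cell p.1 p.2 → x ∈ cell q.1 q.2 → ¬ p.1 < q.1 := by
    intro p q hp hq hx hx' h
    obtain ⟨d, hd⟩ := Nat.exists_eq_add_of_lt h
    refine hq.2.2 p.1 (d + 1) (by omega) (by omega) ?_
    convert hp.1 using 1
    ext i
    rw [← ((mem_cell _ _ _).1 hx i).2, ← ((mem_cell _ _ _).1 hx' i).2, hd, floor_anc (x i) p.1 (d+1)]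
    rfl
  have h1 : p.1 = q.1 := le_antisymm (not_lt.1 (key q p hq hp hx' hx)) (not_lt.1 (key p q hp hq hx hx'))
  refine Prod.ext h1 ?_
  ext i
  rw [← ((mem_cell _ _ _).1 hx i).2, ← ((mem_cell _ _ _).1 hx' i).2, h1]

lemma child_sub {n : ℕ} (k : ℕ) (m m' : Fin n → ℕ) (h : ∀ i, m' i / 2 = m i) :
    cell (k + 1) m' ⊆ cell k m := by
  intro x hx
  rw [mem_cell] at hx ⊢
  intro i
  refine ⟨(hx i).1, ?_⟩
  rw [floor_anc (x i) k 1, (hx i).2, pow_one, h]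

lemma dcube_zero (n : ℕ) : dcube 0 (fun _ : Fin n => 0) = Q0 n := by
  simp only [Q0, dcube]; congr 1 <;> (ext; simp)

lemma key_bound {n : ℕ} (hn : 1 ≤ n) (f : (Fin n → ℝ) → ℝ) (hf : IntegrableOn f (Q0 n))
    (hpos : ∀ x ∈ Q0 n, 0 ≤ f x)
    (g : ℝ → ℝ) (hfs : IsRearrangement (fun x => |f x|) g) (t : ℝ) (ht : t ∈ Ioc (0:ℝ) 1) :
    0 ≤ hardyAvg g t ∧
    ∫ x in Q0 n, max (f x - hardyAvg g t) 0 ≤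
      2 ^ (n - 1) * vGR f (min (2 * t ^ ((n : ℝ))⁻¹) 1) * hardyAvg g t * t := by
  set A := hardyAvg g t with hA
  set v := vGR f (min (2 * t ^ ((n : ℝ))⁻¹) 1) with hv
  have big := big_set f hf hpos g hfs t ht
  have hv0 : 0 ≤ v := v_nonneg _ _
  have hQ1 : volume.real (Q0 n) = 1 := by simp [measureReal_def, vol_Q0]
  have hQA : ∫ x in Q0 n, f x ≤ A := by
    have := big (Q0 n) subset_rfl (by rw [hQ1]; exact ht.2)
    rwa [hQ1, mul_one] at this
  have hA0 : 0 ≤ A := (setIntegral_nonneg (meas_Q0 n) hpos).trans hQA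
  refine ⟨hA0, ?_⟩
  have hchild : ∀ p : {p : ℕ × (Fin n → ℕ) // FirstHot f A p}, ∃ m' : Fin n → ℕ,
      (∀ i, m' i / 2 = p.1.2 i) ∧ A < avgOn f (dcube (p.1.1 + 1) m') := fun p => p.2.1
  choose c hc1 hc2 using hchild
  have hclt : ∀ p i, c p i < 2 ^ (p.1.1 + 1) := by
    intro p i
    have h1 := hc1 p i
    have h2 := p.2.2.1 i
    rw [pow_succ]; omega
  have hcvol : ∀ p, volume.real (dcube (p.1.1 + 1) (c p)) < t := by
    intro p
    by_contra! h
    have h1 := big _ (dcube_sub _ _ (hclt p)) h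
    rw [avg_eq] at h1
    have h2 : 0 < volume.real (dcube (p.1.1 + 1) (c p)) := by rw [vol_dcube]; positivity
    exact absurd (hc2 p) (not_lt.2 (le_of_mul_le_mul_right h1 h2))
  have hn0 : (n:ℝ) ≠ 0 := by positivity
  have hside : ∀ p : {p : ℕ × (Fin n → ℕ) // FirstHot f A p},
      ((2:ℝ) ^ p.1.1)⁻¹ ≤ min (2 * t ^ ((n : ℝ))⁻¹) 1 := by
    intro p
    apply le_min
    · have h1 := (hcvol p).le
      rw [vol_dcube] at h1
      have h2 := Real.rpow_le_rpow (by positivity) h1 (inv_nonneg.2 (Nat.cast_nonneg n))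
      rw [Real.pow_rpow_inv_natCast (by positivity) (by omega), pow_succ, mul_inv] at h2
      linarith
    · exact inv_le_one_of_one_le₀ (one_le_pow₀ (by norm_num))
  have hpavg : ∀ p : {p : ℕ × (Fin n → ℕ) // FirstHot f A p},
      avgOn f (dcube p.1.1 p.1.2) ≤ A := by
    rintro ⟨⟨k, m⟩, hp⟩
    cases k with
    | zero =>
      have : m = fun _ => 0 := by
        ext i; have := hp.2.1 i; simpa using this
      simp only [this, dcube_zero]
      rw [avgOn, ← measureReal_def, hQ1]; simpa using hQA
    | succ j =>
      by_contra! h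
      exact hp.2.2 j 1 one_pos rfl ⟨m, fun i => by simp, h⟩
  have hterm : ∀ p : {p : ℕ × (Fin n → ℕ) // FirstHot f A p},
      ∫ x in dcube p.1.1 p.1.2, max (f x - A) 0 ≤
        2⁻¹ * v * A * (2 ^ n * volume.real (dcube (p.1.1 + 1) (c p))) := by
    intro p
    have hs := dcube_sub p.1.1 p.1.2 p.2.2.1
    have h1 := half_osc f p.1.1 p.1.2 (hf.mono_set hs) A (hpavg p)
    have h2 := osc_v f hf hpos _ p.1.1 p.1.2 p.2.2.1 (hside p)
    have h3 : (2:ℝ) ^ n * volume.real (dcube (p.1.1 + 1) (c p)) =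
        volume.real (dcube p.1.1 p.1.2) := by
      rw [vol_dcube, vol_dcube, ← mul_pow]
      congr 1
      rw [pow_succ]; field_simp
    rw [h3]
    refine h1.trans ?_
    have h4 : vGR f (min (2 * t ^ ((n : ℝ))⁻¹) 1) * avgOn f (dcube p.1.1 p.1.2) ≤ v * A :=
      mul_le_mul_of_nonneg_left (hpavg p) hv0
    have h5 := h2.trans h4
    have h6 := mul_le_mul_of_nonneg_right h5
      (measureReal_nonneg (μ := volume) (s := dcube p.1.1 p.1.2))
    nlinarith
  have hfin : ∀ S : Finset {p : ℕ × (Fin n → ℕ) // FirstHot f A p},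
      ∑ p ∈ S, volume.real (dcube (p.1.1 + 1) (c p)) ≤ t := by
    intro S
    by_contra! h
    have hne : S.Nonempty := by
      rw [Finset.nonempty_iff_ne_empty]; rintro rfl; simp at h; linarith [ht.1]
    have hdisj : Set.Pairwise (↑S) (Function.onFun Disjoint
        fun p : {p : ℕ × (Fin n → ℕ) // FirstHot f A p} => cell (p.1.1 + 1) (c p)) := by
      intro p _ q _ hpq
      rw [Function.onFun, Set.disjoint_left]
      intro x hx hx'
      exact hpq (Subtype.ext (firstHot_unique f A p.1 q.1 p.2 q.2 x
        (child_sub _ _ _ (hc1 p) hx) (child_sub _ _ _ (hc1 q) hx')))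
    have hsub : ∀ p : {p : ℕ × (Fin n → ℕ) // FirstHot f A p},
        cell (p.1.1 + 1) (c p) ⊆ Q0 n := fun p x hx =>
      dcube_sub _ _ (hclt p) ⟨fun i => (hx i (Set.mem_univ _)).1,
        fun i => (hx i (Set.mem_univ _)).2.le⟩
    have hvolU : volume.real (⋃ p ∈ S, cell (p.1.1 + 1) (c p)) =
        ∑ p ∈ S, volume.real (dcube (p.1.1 + 1) (c p)) := by
      rw [measureReal_biUnion_finset hdisj (fun p _ => meas_cell _ _)
        (fun p _ => ((measure_mono (hsub p)).trans_lt (by simp [vol_Q0])).ne)]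
      exact Finset.sum_congr rfl fun p _ => measureReal_congr (cell_ae _ _)
    have hintU : ∫ x in (⋃ p ∈ S, cell (p.1.1 + 1) (c p)), f x =
        ∑ p ∈ S, ∫ x in dcube (p.1.1 + 1) (c p), f x := by
      rw [integral_biUnion_finset S (fun p _ => meas_cell _ _) hdisj
        (fun p _ => hf.mono_set (hsub p))]
      exact Finset.sum_congr rfl fun p _ => setIntegral_congr_set (cell_ae _ _)
    have h1 := big (⋃ p ∈ S, cell (p.1.1 + 1) (c p)) (Set.iUnion₂_subset fun p _ => hsub p)
      (by rw [hvolU]; exact h.le)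
    rw [hvolU, hintU, Finset.mul_sum] at h1
    refine absurd h1 (not_le.2 (Finset.sum_lt_sum_of_nonempty hne fun p _ => ?_))
    rw [avg_eq]
    exact mul_lt_mul_of_pos_right (hc2 p) (by rw [vol_dcube]; positivity)
  -- cover
  have hcover : ∀ᵐ x ∂(volume.restrict (Q0 n)),
      x ∈ (⋃ p : {p : ℕ × (Fin n → ℕ) // FirstHot f A p}, cell p.1.1 p.1.2) ∨ f x ≤ A := by
    filter_upwards [leb f hf A] with x hx
    obtain ⟨hx01, hx⟩ := hx
    by_cases hh : ∃ k, Hot f A k (fun i => ⌊x i * 2 ^ k⌋₊)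
    · left
      classical
      refine Set.mem_iUnion.2 ⟨⟨(Nat.find hh, fun i => ⌊x i * 2 ^ (Nat.find hh)⌋₊),
        Nat.find_spec hh, ?_, ?_⟩, (mem_cell _ _ _).2 fun i => ⟨(hx01 i).1, rfl⟩⟩
      · intro i
        rw [Nat.floor_lt (mul_nonneg (hx01 i).1 (by positivity))]
        push_cast
        have : (0:ℝ) < 2 ^ (Nat.find hh) := by positivity
        nlinarith [(hx01 i).2]
      · intro j d hd hjd
        have h1 := Nat.find_min hh (m := j) (by simp only at hjd; omega)
        simp only at hjd ⊢
        rw [← hjd]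
        simpa only [← floor_anc] using h1
    · right
      push Not at hh
      refine hx fun k => ?_
      cases k with
      | zero =>
        have : (fun i => ⌊x i * 2 ^ 0⌋₊) = fun _ : Fin n => 0 := by
          ext i; simp [(hx01 i).2]
        rw [this, dcube_zero, avgOn, ← measureReal_def, hQ1]; simpa using hQA
      | succ j =>
        by_contra! h
        refine hh j ⟨_, fun i => ?_, h⟩
        show _ = ⌊x i * 2 ^ j⌋₊
        rw [floor_anc (x i) j 1, pow_one]
  have hfm : IsFiniteMeasure (volume.restrict (Q0 n)) := ⟨by simp [vol_Q0]⟩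
  have hm : IntegrableOn (fun x => max (f x - A) 0) (Q0 n) :=
    (hf.sub (integrable_const A)).sup (integrable_zero _ _ _)
  have hR0 : 0 ≤ 2 ^ (n - 1) * v * A * t := by have := ht.1.le; positivity
  rw [← ENNReal.ofReal_le_ofReal_iff hR0,
    ofReal_integral_eq_lintegral_ofReal hm (Filter.Eventually.of_forall fun _ => le_max_right _ _)]
  set h : (Fin n → ℝ) → ENNReal := fun x => ENNReal.ofReal (max (f x - A) 0) with hh
  set W := (⋃ p : {p : ℕ × (Fin n → ℕ) // FirstHot f A p}, cell p.1.1 p.1.2) with hW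
  have hWm : MeasurableSet W := MeasurableSet.iUnion fun p => meas_cell _ _
  calc ∫⁻ x in Q0 n, h x ≤ ∫⁻ x in Q0 n, W.indicator h x := by
        refine lintegral_mono_ae ?_
        filter_upwards [hcover] with x hx
        rcases hx with hx | hx
        · rw [Set.indicator_of_mem hx]
        · have : h x = 0 := by simp [hh, hx]
          rw [this]; exact zero_le
    _ ≤ ∫⁻ x, W.indicator h x := setLIntegral_le_lintegral _ _
    _ = ∫⁻ x in W, h x := lintegral_indicator hWm _
    _ ≤ ∑' p : {p : ℕ × (Fin n → ℕ) // FirstHot f A p}, ∫⁻ x in cell p.1.1 p.1.2, h x :=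
        lintegral_iUnion_le _ _
    _ ≤ ENNReal.ofReal (2 ^ (n - 1) * v * A * t) := by
        rw [ENNReal.tsum_eq_iSup_sum]
        refine iSup_le fun S => ?_
        calc ∑ p ∈ S, ∫⁻ x in cell p.1.1 p.1.2, h x
            ≤ ∑ p ∈ S, ENNReal.ofReal
              (2⁻¹ * v * A * (2 ^ n * volume.real (dcube (p.1.1 + 1) (c p)))) := by
              refine Finset.sum_le_sum fun p _ => ?_
              rw [setLIntegral_congr (cell_ae _ _), ← ofReal_integral_eq_lintegral_ofReal
                (hm.mono_set (dcube_sub _ _ p.2.2.1))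
                (Filter.Eventually.of_forall fun _ => le_max_right _ _)]
              exact ENNReal.ofReal_le_ofReal (hterm p)
          _ = ENNReal.ofReal (∑ p ∈ S,
              (2⁻¹ * v * A * (2 ^ n * volume.real (dcube (p.1.1 + 1) (c p))))) := by
              rw [ENNReal.ofReal_sum_of_nonneg]
              intro p _; positivity
          _ ≤ _ := by
              apply ENNReal.ofReal_le_ofReal
              rw [← Finset.mul_sum, ← Finset.mul_sum]
              have e : (2:ℝ) ^ n = 2 * 2 ^ (n - 1) := by
                rw [← pow_succ']; congr 1; omega
              rw [e]
              have h1 := mul_le_mul_of_nonneg_left (hfin S)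
                (show 0 ≤ 2 ^ (n - 1) * v * A by positivity)
              calc _ = 2 ^ (n - 1) * v * A * ∑ p ∈ S, volume.real (dcube (p.1.1 + 1) (c p)) := by
                    ring
                _ ≤ _ := h1

/-- For integrable `f : [0,1]ⁿ → [0,∞)`, every `t ∈ (0,1]` and every `γ > 1` (so that
`t/γ ∈ (0,1]`), `f**(t/γ) ≤ (1 + 2ⁿ⁻¹ γ v(f;σ_t)) f**(t)` where `σ_t = min(2 t^{1/n}, 1)`. -/
theorem hardy_average_step (n : ℕ) (hn : 1 ≤ n)
    (f : (Fin n → ℝ) → ℝ) (hf : IntegrableOn f (Q0 n)) (hpos : ∀ x ∈ Q0 n, 0 ≤ f x)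
    (fstar : ℝ → ℝ) (hfs : IsRearrangement (fun x => |f x|) fstar) :
    ∀ t ∈ Set.Ioc (0:ℝ) 1, ∀ γ : ℝ, 1 < γ →
      hardyAvg fstar (t / γ) ≤
        (1 + 2 ^ (n - 1) * γ * vGR f (min (2 * t ^ ((n : ℝ))⁻¹) 1)) * hardyAvg fstar t := by
  intro t ht γ hγ
  obtain ⟨hA0, hkey⟩ := key_bound hn f hf hpos fstar hfs t ht
  obtain ⟨hgi, hc⟩ := rearr_int f hf hpos fstar hfs
  set A := hardyAvg fstar t with hA
  set v := vGR f (min (2 * t ^ ((n : ℝ))⁻¹) 1) with hv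
  rw [← hc] at hkey
  have hs0 : 0 < t / γ := div_pos ht.1 (by linarith)
  have hs1 : t / γ ≤ 1 := (div_le_self ht.1.le hγ.le).trans ht.2
  have hgs : IntegrableOn fstar (Set.Ioc 0 (t / γ)) := hgi.mono_set (Set.Ioc_subset_Ioc_right hs1)
  have hm : IntegrableOn (fun u => max (fstar u - A) 0) (Set.Ioc 0 1) :=
    (hgi.sub (integrableOn_const (by simp))).sup (integrable_zero _ _ _)
  have h1 : ∫ u in Set.Ioc 0 (t / γ), (fstar u - A) ≤ 2 ^ (n - 1) * v * A * t := by
    refine le_trans ?_ hkey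
    calc _ ≤ ∫ u in Set.Ioc 0 (t / γ), max (fstar u - A) 0 :=
          integral_mono (hgs.sub (integrableOn_const (by simp)))
            (hm.mono_set (Set.Ioc_subset_Ioc_right hs1)) fun _ => le_max_left _ _
      _ ≤ _ := setIntegral_mono_set hm (Filter.Eventually.of_forall fun _ => le_max_right _ _)
            (Filter.Eventually.of_forall (Set.Ioc_subset_Ioc_right hs1))
  rw [integral_sub hgs (integrableOn_const (by simp)), setIntegral_const] at h1
  simp only [Real.volume_real_Ioc_of_le hs0.le, sub_zero, smul_eq_mul] at h1
  rw [hardyAvg, inv_mul_le_iff₀ hs0]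
  have hγ0 : γ ≠ 0 := by positivity
  have e : t / γ * ((1 + 2 ^ (n - 1) * γ * v) * A) = t / γ * A + 2 ^ (n - 1) * v * A * t := by
    field_simp
  rw [e]; linarith
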